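/- Let n ≥ 1 be an integer, a = (a_1,…,a_{p−1}) a vector of positive reals and b = (b_1,…,b_p) a vector of positive reals. If the function r ↦ p−1Fp(a;b;−r²) on [0,∞) is n-RPD, then ∑_{j=1}^p b_j − ∑_{j=1}^{p−1} a_j ≥ n/2. -/

import Mathlib

/-!
Write `f(r) = ∑ (-1)ᵏ cₖ r²ᵏ` for the hypergeometric function at `-r²`, and put
`Mₖ = cₖ · k! · (n/2)ₖ = (n/2)ₖ ∏ (aᵢ)ₖ / ∏ (bⱼ)ₖ`. Since `Δᵏ ‖x‖²ᵏ = 4ᵏ k! (n/2)ₖ`, one has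
`Δᵏ (f ∘ ‖·‖)(0) = (-4)ᵏ Mₖ`.

Positive definiteness of `F = f ∘ ‖·‖` says `(P (P F))(0) ≥ 0` for every finite symmetric real
combination `P` of translations (`FinRep.sq_nonneg`). Taking `P` in the span of two powers of the
discrete Laplacian `diffLap h`, rescaling and letting `h → 0` shows that the quadratic form
`α² Δ²ⁱF(0) + 2αβ Δⁱ⁺ʲF(0) + β² Δ²ʲF(0)` is nonnegative, and with `j = i + 2` this yields
`M₂ᵢ₊₂² ≤ M₂ᵢ M₂ᵢ₊₄` (`logconvex`): the even-indexed `M` are log-convex.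

The successive ratios of a log-convex sequence increase. Here they tend to `1`, so all of them are
at most `1`. On the other hand `k · log (Mₖ₊₁ / Mₖ) → n/2 + ∑ aᵢ - ∑ bⱼ`
(`tendsto_mul_logRatio`), so if this limit were positive the ratios would eventually exceed `1`.

The passage from the discrete to the true Laplacian is algebraic: on polynomials in `x` with
coefficients in `ℝ[h]` the discrete Laplacian is `h² (Δ + O(h))` (`polyDiff_eq`), hence its `k`-th
power is `h²ᵏ (Δᵏ + O(h))`. The tail of the series of `f` beyond `r²ᵏ` is `O(r²ᵏ⁺²)` and does not
contribute to the limit (`tendsto_diffLap_series`).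
-/


/-- Rising factorial (Pochhammer symbol) `(x)_k = x(x+1)⋯(x+k-1)` for real `x`. -/
noncomputable def risingFactorial (x : ℝ) (k : ℕ) : ℝ := ∏ i ∈ Finset.range k, (x + (i : ℝ))

/-- The generalized hypergeometric function `pFq(a;b;z)` with real parameters and real
argument, defined by its power series (which converges for every `z` when `p ≤ q`). -/
noncomputable def pFq {p q : ℕ} (a : Fin p → ℝ) (b : Fin q → ℝ) (z : ℝ) : ℝ :=
  ∑' k : ℕ,
    (∏ i, risingFactorial (a i) k) /
      ((∏ j, risingFactorial (b j) k) * (k.factorial : ℝ)) * z ^ k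


/-- A continuous function `f : [0,∞) → ℝ` (modelled as `f : ℝ → ℝ` continuous on
`[0,∞)`) is `n`-RPD (radial positive definite in dimension `n`, class `Φ_n`) if for all
`m`, all points `t_1,…,t_m ∈ ℝ^n` and all complex `ξ_1,…,ξ_m`, the Hermitian sum
`∑_{i,j} f(‖t_i - t_j‖) ξ_i conj(ξ_j)` is a nonnegative real number. -/
def IsRPD (n : ℕ) (f : ℝ → ℝ) : Prop :=
  ContinuousOn f (Set.Ici 0) ∧
  ∀ (m : ℕ) (t : Fin m → EuclideanSpace ℝ (Fin n)) (ξ : Fin m → ℂ),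
    ∃ c : ℝ, 0 ≤ c ∧
      (∑ i, ∑ j, (f ‖t i - t j‖ : ℂ) * ξ i * (starRingEnd ℂ) (ξ j)) = (c : ℂ)

open Filter Topology

namespace RPDExcess

/-! ### Finite symmetric combinations of translations -/

/-- `P` is a finite real combination of translations of `E`, symmetric under `t ↦ -t`: the same
weights `c` and shifts `t` represent `P` both through `y + t i` and through `y - t i`. -/
def FinRep {E : Type} [AddCommGroup E] (P : Module.End ℝ (E → ℝ)) : Prop :=
  ∃ (ι : Type) (_ : Fintype ι) (c : ι → ℝ) (t : ι → E), ∀ (G : E → ℝ) (y : E),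
    P G y = ∑ i, c i * G (y + t i) ∧ P G y = ∑ i, c i * G (y - t i)

section FinRep
variable {E : Type} [AddCommGroup E] {P Q : Module.End ℝ (E → ℝ)}

lemma FinRep.one : FinRep (1 : Module.End ℝ (E → ℝ)) :=
  ⟨Unit, inferInstance, fun _ => 1, fun _ => 0, fun G y => by simp⟩

lemma FinRep.smul (r : ℝ) (hP : FinRep P) : FinRep (r • P) := by
  obtain ⟨ι, _, c, t, h⟩ := hP
  refine ⟨ι, inferInstance, fun i => r * c i, t, fun G y => ?_⟩
  simp only [LinearMap.smul_apply, Pi.smul_apply, smul_eq_mul, mul_assoc, ← Finset.mul_sum]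
  exact ⟨by rw [(h G y).1], by rw [(h G y).2]⟩

lemma FinRep.add (hP : FinRep P) (hQ : FinRep Q) : FinRep (P + Q) := by
  obtain ⟨ι, _, c, t, h⟩ := hP
  obtain ⟨κ, _, d, s, k⟩ := hQ
  refine ⟨ι ⊕ κ, inferInstance, Sum.elim c d, Sum.elim t s, fun G y => ?_⟩
  simp only [LinearMap.add_apply, Pi.add_apply, Fintype.sum_sum_type, Sum.elim_inl, Sum.elim_inr]
  exact ⟨by rw [(h G y).1, (k G y).1], by rw [(h G y).2, (k G y).2]⟩

lemma FinRep.mul (hP : FinRep P) (hQ : FinRep Q) : FinRep (P * Q) := by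
  obtain ⟨ι, _, c, t, h⟩ := hP
  obtain ⟨κ, _, d, s, k⟩ := hQ
  refine ⟨ι × κ, inferInstance, fun x => c x.1 * d x.2, fun x => t x.1 + s x.2, fun G y => ?_⟩
  simp only [Module.End.mul_apply, Fintype.sum_prod_type, mul_assoc, ← Finset.mul_sum]
  refine ⟨?_, ?_⟩
  · rw [(h (Q G) y).1]
    simp only [(k G _).1, add_assoc]
  · rw [(h (Q G) y).2]
    simp only [(k G _).2, sub_sub]

lemma FinRep.zero : FinRep (0 : Module.End ℝ (E → ℝ)) := by
  simpa using (FinRep.one (E := E)).smul 0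

lemma FinRep.pow (hP : FinRep P) (k : ℕ) : FinRep (P ^ k) := by
  induction k with
  | zero => simpa using FinRep.one
  | succ k ih => rw [pow_succ]; exact ih.mul hP

lemma FinRep.sum {ι : Type} (s : Finset ι) (f : ι → Module.End ℝ (E → ℝ))
    (hf : ∀ i, FinRep (f i)) : FinRep (∑ i ∈ s, f i) := by
  classical
  induction s using Finset.induction_on with
  | empty => simpa using FinRep.zero
  | insert i s hi ih => rw [Finset.sum_insert hi]; exact (hf i).add ih

end FinRep

/-- The discrete Laplacian with step `h`,
`G ↦ ∑ₗ (G (x + h eₗ) + G (x - h eₗ) - 2 G x)`, as an operator on all functions. It is not divided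
by `h²`. -/
noncomputable def diffLap {n : ℕ} (h : ℝ) : Module.End ℝ (EuclideanSpace ℝ (Fin n) → ℝ) :=
  ∑ l, (LinearMap.funLeft ℝ ℝ (fun x => x + h • EuclideanSpace.single l 1)
    + LinearMap.funLeft ℝ ℝ (fun x => x - h • EuclideanSpace.single l 1)
    + (-2 : ℝ) • 1)

lemma diffLap_apply {n : ℕ} (h : ℝ) (G : EuclideanSpace ℝ (Fin n) → ℝ)
    (x : EuclideanSpace ℝ (Fin n)) :
    diffLap h G x = ∑ l, (G (x + h • EuclideanSpace.single l 1)
      + G (x - h • EuclideanSpace.single l 1) - 2 * G x) := by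
  simp [diffLap, LinearMap.sum_apply, Finset.sum_apply, LinearMap.funLeft_apply, sub_eq_add_neg]

lemma finRep_diffLap {n : ℕ} (h : ℝ) : FinRep (diffLap (n := n) h) := by
  refine FinRep.sum _ _ fun l => FinRep.add ?_ (FinRep.one.smul _)
  refine ⟨Fin 2, inferInstance, fun _ => 1,
    ![h • EuclideanSpace.single l 1, -(h • EuclideanSpace.single l 1)], fun G y => ?_⟩
  simp [LinearMap.funLeft_apply, Fin.sum_univ_two, sub_eq_add_neg]
  ring

lemma diffLap_pow_scale {n : ℕ} (h : ℝ) (k : ℕ) (G : EuclideanSpace ℝ (Fin n) → ℝ)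
    (x : EuclideanSpace ℝ (Fin n)) :
    (diffLap h ^ k) G (h • x) = (diffLap 1 ^ k) (fun y => G (h • y)) x := by
  induction k generalizing x with
  | zero => simp
  | succ k ih =>
    rw [pow_succ', pow_succ', Module.End.mul_apply, Module.End.mul_apply, diffLap_apply,
      diffLap_apply]
    simp only [← ih, one_smul, smul_add, smul_sub]

/-- Positive definiteness of `f ∘ ‖·‖` in operator form: using the `+ t i` representation for the
outer `P` and the `- t j` representation for the inner one, `P (P F) 0` is the quadratic form
`∑ c i c j f ‖t i - t j‖`. -/
lemma FinRep.sq_nonneg {n : ℕ} {f : ℝ → ℝ} (hf : IsRPD n f)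
    {P : Module.End ℝ (EuclideanSpace ℝ (Fin n) → ℝ)} (hP : FinRep P) :
    0 ≤ P (P (fun x => f ‖x‖)) 0 := by
  obtain ⟨ι, _, c, t, h⟩ := hP
  let e := Fintype.equivFin ι
  obtain ⟨r, hr, hsum⟩ := hf.2 (Fintype.card ι) (fun i => t (e.symm i))
    (fun i => (c (e.symm i) : ℂ))
  have hsum' : ∑ i, ∑ j, f ‖t (e.symm i) - t (e.symm j)‖ * c (e.symm i) * c (e.symm j) = r := by
    simp only [Complex.conj_ofReal] at hsum
    exact_mod_cast hsum
  have hre : ∑ i, ∑ j, f ‖t i - t j‖ * c i * c j = r := by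
    rw [← hsum', ← e.symm.sum_comp]
    refine Finset.sum_congr rfl fun i _ => ?_
    rw [← e.symm.sum_comp]
  rw [(h _ 0).1]
  have : ∑ i, c i * P (fun x => f ‖x‖) (0 + t i) = r := by
    rw [← hre]
    refine Finset.sum_congr rfl fun i _ => ?_
    rw [zero_add, (h _ _).2, Finset.mul_sum]
    exact Finset.sum_congr rfl fun j _ => by ring
  rw [this]; exact hr

/-- `FinRep.sq_nonneg` for `P = α (diffLap h)ⁱ + β (diffLap h)ʲ`, expanded. -/
lemma quad_nonneg {n : ℕ} {f : ℝ → ℝ} (hf : IsRPD n f) (h α β : ℝ) (i j : ℕ) :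
    0 ≤ α ^ 2 * (diffLap h ^ (2 * i)) (fun x : EuclideanSpace ℝ (Fin n) => f ‖x‖) 0
      + 2 * α * β * (diffLap h ^ (i + j)) (fun x : EuclideanSpace ℝ (Fin n) => f ‖x‖) 0
      + β ^ 2 * (diffLap h ^ (2 * j)) (fun x : EuclideanSpace ℝ (Fin n) => f ‖x‖) 0 := by
  have hP : FinRep (α • diffLap (n := n) h ^ i + β • diffLap h ^ j) :=
    (((finRep_diffLap h).pow i).smul α).add (((finRep_diffLap h).pow j).smul β)
  have := FinRep.sq_nonneg hf hP
  rw [← Module.End.mul_apply] at this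
  have e : (α • diffLap (n := n) h ^ i + β • diffLap h ^ j) *
      (α • diffLap (n := n) h ^ i + β • diffLap h ^ j) =
      α ^ 2 • diffLap h ^ (2 * i) + (2 * α * β) • diffLap h ^ (i + j)
        + β ^ 2 • diffLap h ^ (2 * j) := by
    rw [mul_add, add_mul, add_mul]
    simp only [smul_mul_smul_comm, ← pow_add, add_comm j i, two_mul, add_mul, add_smul, pow_two,
      mul_comm β α]
    abel
  rw [e] at this
  simpa using this

/-! ### The discrete Laplacian on polynomials -/

open MvPolynomial in
/-- The substitution `Xₗ ↦ Xₗ + ε` on polynomials, the other variables being fixed. -/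
noncomputable def shift {n : ℕ} {R : Type} [CommRing R] (l : Fin n) (ε : R) :
    MvPolynomial (Fin n) R →ₐ[R] MvPolynomial (Fin n) R :=
  aeval (fun i => X i + if i = l then C ε else 0)

open MvPolynomial in
/-- Taylor's formula to second order, with a polynomial remainder divisible by `ε³`. -/
lemma shift_taylor {n : ℕ} {R : Type} [CommRing R] [Algebra ℝ R] (l : Fin n) (ε : R)
    (p : MvPolynomial (Fin n) R) :
    ∃ q, shift l ε p = p + C ε * pderiv l p + C ε ^ 2 * ((1 / 2 : ℝ) • pderiv l (pderiv l p))
      + C ε ^ 3 * q := by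
  induction p using MvPolynomial.induction_on with
  | C a => exact ⟨0, by simp [shift, MvPolynomial.algebraMap_eq]⟩
  | add p q hp hq =>
    obtain ⟨p', hp⟩ := hp
    obtain ⟨q', hq⟩ := hq
    exact ⟨p' + q', by simp only [map_add, hp, hq, smul_add]; ring⟩
  | mul_X p i hp =>
    obtain ⟨q, hp⟩ := hp
    by_cases hi : i = l
    · subst hi
      refine ⟨q * X i + (1 / 2 : ℝ) • pderiv i (pderiv i p) + C ε * q, ?_⟩
      have hX : shift i ε (X i) = X i + C ε := by simp [shift]
      rw [map_mul, hp, hX]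
      simp only [pderiv_mul, pderiv_X_self, map_add, mul_one]
      have : (1 / 2 : ℝ) • (pderiv i (pderiv i p) * X i + pderiv i p + pderiv i p)
        = ((1 / 2 : ℝ) • pderiv i (pderiv i p)) * X i + pderiv i p := by
        rw [add_assoc, smul_add, ← two_smul ℝ, smul_smul, smul_mul_assoc]
        norm_num
      rw [this]
      ring
    · refine ⟨q * X i, ?_⟩
      have hX : shift l ε (X i) = X i := by simp [shift, hi]
      rw [map_mul, hp, hX]
      simp only [pderiv_mul, pderiv_X_of_ne hi, mul_zero, add_zero, ← smul_mul_assoc]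
      ring

open MvPolynomial in
/-- The formal Laplacian of a polynomial. -/
noncomputable def lap {n : ℕ} {R : Type} [CommRing R] (p : MvPolynomial (Fin n) R) :
    MvPolynomial (Fin n) R := ∑ l, pderiv l (pderiv l p)

open MvPolynomial in
/-- The discrete Laplacian on polynomials in `x`, the step `h` being the indeterminate of the
coefficient ring `ℝ[h]`. -/
noncomputable def polyDiff {n : ℕ} (p : MvPolynomial (Fin n) (Polynomial ℝ)) :
    MvPolynomial (Fin n) (Polynomial ℝ) :=
  ∑ l, (shift l Polynomial.X p + shift l (-Polynomial.X) p - 2 * p)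

open MvPolynomial in
/-- The discrete Laplacian is `h² (Δ + O(h))`; the first-order terms of `shift_taylor` cancel
between the steps `h` and `-h`. -/
lemma polyDiff_eq {n : ℕ} (p : MvPolynomial (Fin n) (Polynomial ℝ)) :
    ∃ q, polyDiff p = C Polynomial.X ^ 2 * (lap p + C Polynomial.X * q) := by
  choose q hq using fun l => shift_taylor l Polynomial.X p
  choose q' hq' using fun l => shift_taylor l (-Polynomial.X) p
  refine ⟨∑ l, (q l - q' l), ?_⟩
  rw [polyDiff, lap, Finset.mul_sum, ← Finset.sum_add_distrib, Finset.mul_sum]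
  refine Finset.sum_congr rfl fun l _ => ?_
  have h2 : (1 / 2 : ℝ) • pderiv l (pderiv l p) + (1 / 2 : ℝ) • pderiv l (pderiv l p)
      = pderiv l (pderiv l p) := by
    rw [← add_smul]; norm_num
  rw [hq, hq']
  simp only [map_neg]
  linear_combination (C Polynomial.X ^ 2) * h2

open MvPolynomial in
lemma polyDiff_C_mul {n : ℕ} (r : Polynomial ℝ) (p : MvPolynomial (Fin n) (Polynomial ℝ)) :
    polyDiff (C r * p) = C r * polyDiff p := by
  simp only [polyDiff, C_mul', map_smul, Finset.smul_sum, smul_sub, smul_add, mul_smul_comm]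

lemma polyDiff_add {n : ℕ} (p q : MvPolynomial (Fin n) (Polynomial ℝ)) :
    polyDiff (p + q) = polyDiff p + polyDiff q := by
  simp only [polyDiff, ← Finset.sum_add_distrib, map_add]
  exact Finset.sum_congr rfl fun l _ => by ring

open MvPolynomial in
lemma polyDiff_iterate {n : ℕ} (k : ℕ) (p : MvPolynomial (Fin n) (Polynomial ℝ)) :
    ∃ q, polyDiff^[k] p = C Polynomial.X ^ (2 * k) * (lap^[k] p + C Polynomial.X * q) := by
  induction k with
  | zero => exact ⟨0, by simp⟩
  | succ k ih =>
    obtain ⟨q, hq⟩ := ih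
    obtain ⟨q₁, h₁⟩ := polyDiff_eq (lap^[k] p)
    obtain ⟨q₂, h₂⟩ := polyDiff_eq q
    refine ⟨q₁ + (lap q + C Polynomial.X * q₂), ?_⟩
    rw [Function.iterate_succ_apply', Function.iterate_succ_apply', hq, ← C_pow, polyDiff_C_mul,
      polyDiff_add, polyDiff_C_mul, h₁, h₂]
    simp only [C_pow]
    ring

open MvPolynomial in
/-- Evaluation at a real step `h` and a point `x`. -/
noncomputable def ev {n : ℕ} (h : ℝ) (x : EuclideanSpace ℝ (Fin n)) :
    MvPolynomial (Fin n) (Polynomial ℝ) →+* ℝ :=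
  eval₂Hom (Polynomial.evalRingHom h) (fun i => x i)

open MvPolynomial in
lemma ev_shift {n : ℕ} (h : ℝ) (x : EuclideanSpace ℝ (Fin n)) (l : Fin n) (ε : Polynomial ℝ)
    (p : MvPolynomial (Fin n) (Polynomial ℝ)) :
    ev h x (shift l ε p) = ev h (x + ε.eval h • EuclideanSpace.single l 1) p := by
  have : (ev h x).comp (shift l ε : _ →ₐ[Polynomial ℝ] _).toRingHom
      = ev h (x + ε.eval h • EuclideanSpace.single l 1) := by
    refine MvPolynomial.ringHom_ext (fun r => ?_) (fun i => ?_)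
    · simp [ev, shift, MvPolynomial.algebraMap_eq]
    · by_cases hi : i = l <;> simp [ev, shift, hi]
  exact congrArg (fun φ => φ p) this

lemma ev_polyDiff {n : ℕ} (h : ℝ) (k : ℕ) (x : EuclideanSpace ℝ (Fin n))
    (p : MvPolynomial (Fin n) (Polynomial ℝ)) :
    (diffLap h ^ k) (fun y => ev h y p) x = ev h x (polyDiff^[k] p) := by
  induction k generalizing x with
  | zero => simp
  | succ k ih =>
    rw [pow_succ', Module.End.mul_apply, diffLap_apply, Function.iterate_succ_apply']
    simp only [ih, polyDiff, map_sum, map_sub, map_add, map_mul, ev_shift, map_ofNat,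
      Polynomial.eval_X, Polynomial.eval_neg, neg_smul]
    simp only [sub_eq_add_neg]

open MvPolynomial in
/-- The polynomial `∑ Xᵢ²`, representing `‖x‖²`. -/
noncomputable def normSqPoly (n : ℕ) : MvPolynomial (Fin n) (Polynomial ℝ) := ∑ i, X i ^ 2

lemma ev_normSqPoly {n : ℕ} (h : ℝ) (x : EuclideanSpace ℝ (Fin n)) :
    ev h x (normSqPoly n) = ‖x‖ ^ 2 := by
  simp [EuclideanSpace.norm_sq_eq, normSqPoly, ev]

open MvPolynomial in
lemma pderiv_normSqPoly {n : ℕ} (l : Fin n) : pderiv l (normSqPoly n) = 2 * X l := by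
  simp only [normSqPoly, map_sum, pderiv_pow, pderiv_X]
  rw [Finset.sum_eq_single l] <;> simp +contextual

open MvPolynomial in
/-- `Δ ‖x‖²⁽ᵐ⁺¹⁾ = 4 (m + 1) (n/2 + m) ‖x‖²ᵐ`; this is where the factors of `(n/2)ₖ` arise. -/
lemma lap_normSqPoly_pow {n : ℕ} (m : ℕ) :
    lap (normSqPoly n ^ (m + 1))
      = C (Polynomial.C (4 * ((m : ℝ) + 1) * (n / 2 + m))) * normSqPoly n ^ m := by
  have hC : (C (Polynomial.C (4 * ((m : ℝ) + 1) * (n / 2 + m))) :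
      MvPolynomial (Fin n) (Polynomial ℝ)) = (m + 1) * (4 * m + 2 * n) := by
    have : (4 * ((m : ℝ) + 1) * (n / 2 + m)) = ((m + 1) * (4 * m + 2 * n) : ℝ) := by ring
    rw [this]
    simp only [map_mul, map_add, map_natCast, map_ofNat, map_one]
  rw [hC, lap]
  have hterm : ∀ l : Fin n, pderiv l (pderiv l (normSqPoly n ^ (m + 1)))
      = ((m : MvPolynomial (Fin n) (Polynomial ℝ)) + 1)
          * (4 * (m : MvPolynomial (Fin n) (Polynomial ℝ)) * normSqPoly n ^ (m - 1)) * X l ^ 2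
        + 2 * ((m : MvPolynomial (Fin n) (Polynomial ℝ)) + 1) * normSqPoly n ^ m := by
    intro l
    have h2 : pderiv l (2 : MvPolynomial (Fin n) (Polynomial ℝ)) = 0 := by
      simpa using (pderiv l).map_natCast 2
    have hm : pderiv l ((m + 1 : ℕ) : MvPolynomial (Fin n) (Polynomial ℝ)) = 0 :=
      (pderiv l).map_natCast _
    rw [pderiv_pow, pderiv_normSqPoly]
    simp only [pderiv_mul, pderiv_pow, pderiv_normSqPoly, h2, hm, pderiv_X_self,
      Nat.add_sub_cancel]
    push_cast
    ring
  simp only [hterm, Finset.sum_add_distrib, ← Finset.mul_sum]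
  rw [show ∑ i : Fin n, (X i ^ 2 : MvPolynomial (Fin n) (Polynomial ℝ)) = normSqPoly n from rfl]
  rcases m with _ | m
  · simp
  · simp
    ring

lemma lap_C_mul {n : ℕ} (r : Polynomial ℝ) (p : MvPolynomial (Fin n) (Polynomial ℝ)) :
    lap (MvPolynomial.C r * p) = MvPolynomial.C r * lap p := by
  simp only [lap, MvPolynomial.pderiv_C_mul, Finset.mul_sum]

lemma lap_iter_C_mul {n : ℕ} (k : ℕ) (r : Polynomial ℝ)
    (p : MvPolynomial (Fin n) (Polynomial ℝ)) :
    lap^[k] (MvPolynomial.C r * p) = MvPolynomial.C r * lap^[k] p := by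
  induction k with
  | zero => rfl
  | succ k ih => rw [Function.iterate_succ_apply', Function.iterate_succ_apply', ih, lap_C_mul]

lemma lap_iter_normSqPoly {n : ℕ} (k m : ℕ) (hm : m ≤ k) :
    lap^[k] (normSqPoly n ^ m) = MvPolynomial.C (Polynomial.C
      (if m = k then 4 ^ k * (k.factorial : ℝ) * risingFactorial (n / 2) k else 0)) := by
  induction k generalizing m with
  | zero => obtain rfl : m = 0 := by omega
            simp [risingFactorial]
  | succ k ih =>
    rw [Function.iterate_succ_apply]
    rcases m with _ | m
    · have h0 : lap (normSqPoly n ^ 0) = MvPolynomial.C 0 * 1 := by simp [lap]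
      rw [h0, lap_iter_C_mul]; simp
    · rw [lap_normSqPoly_pow, lap_iter_C_mul, ih m (by omega), ← MvPolynomial.C_mul,
        ← Polynomial.C_mul]
      by_cases h : m = k
      · subst h
        simp only [if_true, risingFactorial, Finset.prod_range_succ, Nat.factorial_succ, pow_succ]
        push_cast
        congr 2
        ring
      · simp [h]

/-- The limit as the step tends to `0` of the rescaled discrete `Δᵏ ‖x‖²ᵐ` at the origin. -/
lemma tendsto_diffLap_norm_pow {n : ℕ} (k m : ℕ) (hm : m ≤ k) :
    Tendsto (fun h : ℝ => (diffLap h ^ k)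
        (fun x : EuclideanSpace ℝ (Fin n) => (‖x‖ ^ 2) ^ m) 0 / h ^ (2 * k)) (𝓝[>] 0)
      (𝓝 (if m = k then 4 ^ k * (k.factorial : ℝ) * risingFactorial (n / 2) k else 0)) := by
  obtain ⟨q, hq⟩ := polyDiff_iterate k (normSqPoly n ^ m)
  rw [lap_iter_normSqPoly k m hm] at hq
  set A : ℝ := if m = k then 4 ^ k * (k.factorial : ℝ) * risingFactorial (n / 2) k else 0
  -- at the origin `q` becomes a polynomial in `h`
  have hq0 : ∀ h : ℝ, ev h 0 q = (MvPolynomial.constantCoeff q).eval h := by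
    intro h
    have : ev (n := n) h 0 = (Polynomial.evalRingHom h).comp MvPolynomial.constantCoeff := by
      refine MvPolynomial.ringHom_ext (fun r => ?_) (fun i => ?_) <;> simp [ev]
    rw [this]; rfl
  have hlim : Tendsto (fun h : ℝ => A + h * (MvPolynomial.constantCoeff q).eval h) (𝓝[>] 0)
      (𝓝 A) := by
    have hc : Continuous fun h : ℝ => A + h * (MvPolynomial.constantCoeff q).eval h := by
      fun_prop
    simpa using (hc.tendsto 0).mono_left nhdsWithin_le_nhds
  refine hlim.congr' ?_
  filter_upwards [self_mem_nhdsWithin] with h (hh : 0 < h)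
  have hfun : (fun x : EuclideanSpace ℝ (Fin n) => (‖x‖ ^ 2) ^ m)
      = fun x => ev h x (normSqPoly n ^ m) := by
    funext x; rw [map_pow, ev_normSqPoly]
  rw [hfun, ev_polyDiff, hq, map_mul, map_add, map_mul, hq0, map_pow]
  have h1 : ev (n := n) h 0 (MvPolynomial.C Polynomial.X) = h := by simp [ev]
  have h2 : ev (n := n) h 0 (MvPolynomial.C (Polynomial.C A)) = A := by simp [ev]
  rw [h1, h2]
  field_simp

/-! ### Iterated Laplacians of a radial power series at the origin -/

/-- The coefficient of `zᵏ` in the series `pFq a b z`. -/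
noncomputable def coef {p q : ℕ} (a : Fin p → ℝ) (b : Fin q → ℝ) (k : ℕ) : ℝ :=
  (∏ i, risingFactorial (a i) k) / ((∏ j, risingFactorial (b j) k) * (k.factorial : ℝ))

lemma risingFactorial_pos {x : ℝ} (hx : 0 < x) (k : ℕ) : 0 < risingFactorial x k :=
  Finset.prod_pos fun i _ => by positivity

lemma risingFactorial_succ (x : ℝ) (k : ℕ) :
    risingFactorial x (k + 1) = risingFactorial x k * (x + k) :=
  Finset.prod_range_succ _ _

/-- `Δᵏ F (0) = (-4)ᵏ gₖ k! (n/2)ₖ` for `F x = ∑ gₘ (-‖x‖²)ᵐ`, with `Δᵏ F (0)` read as the limit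
of rescaled discrete Laplacians. Absolute summability of `g` bounds the tail on the unit ball. -/
lemma tendsto_diffLap_series {n : ℕ} (g : ℕ → ℝ) (hg : Summable fun m => |g m|) (k : ℕ) :
    Tendsto (fun h : ℝ => (diffLap h ^ k)
        (fun x : EuclideanSpace ℝ (Fin n) => ∑' m, g m * (-(‖x‖ ^ 2)) ^ m) 0 / h ^ (2 * k))
      (𝓝[>] 0)
      (𝓝 ((-4) ^ k * (g k * (k.factorial : ℝ) * risingFactorial (n / 2) k))) := by
  set F : EuclideanSpace ℝ (Fin n) → ℝ := fun x => ∑' m, g m * (-(‖x‖ ^ 2)) ^ m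
  set S : EuclideanSpace ℝ (Fin n) → ℝ :=
    ∑ m ∈ Finset.range (k + 1), (g m * (-1) ^ m) • fun x : EuclideanSpace ℝ (Fin n) =>
      (‖x‖ ^ 2) ^ m with hS
  have hrem : ∀ x, ‖x‖ ≤ 1 → |F x - S x| ≤ (∑' m, |g m|) * (‖x‖ ^ 2) ^ (k + 1) := by
    intro x hx
    have hx2 : ‖x‖ ^ 2 ≤ 1 := pow_le_one₀ (norm_nonneg _) hx
    have hb : ∀ m, |g m * (-(‖x‖ ^ 2)) ^ m| ≤ |g m| := fun m => by
      rw [abs_mul, abs_pow, abs_neg, abs_of_nonneg (by positivity : 0 ≤ ‖x‖ ^ 2)]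
      exact mul_le_of_le_one_right (abs_nonneg _) (pow_le_one₀ (by positivity) hx2)
    have hs : Summable fun m => g m * (-(‖x‖ ^ 2)) ^ m :=
      Summable.of_abs (Summable.of_nonneg_of_le (fun _ => abs_nonneg _) hb hg)
    have hsplit := hs.sum_add_tsum_nat_add (k + 1)
    have hSx : S x = ∑ m ∈ Finset.range (k + 1), g m * (-(‖x‖ ^ 2)) ^ m := by
      simp only [hS, Finset.sum_apply, Pi.smul_apply, smul_eq_mul]
      exact Finset.sum_congr rfl fun m _ => by rw [neg_pow (‖x‖ ^ 2) m]; ring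
    have hFS : F x - S x = ∑' m, g (m + (k + 1)) * (-(‖x‖ ^ 2)) ^ (m + (k + 1)) := by
      rw [hSx]; simp only [F]; linarith
    have hg' : Summable fun m => |g (m + (k + 1))| :=
      (summable_nat_add_iff (f := fun m => |g m|) (k + 1)).2 hg
    have hle : ∀ m, ‖g (m + (k + 1)) * (-(‖x‖ ^ 2)) ^ (m + (k + 1))‖
        ≤ |g (m + (k + 1))| * (‖x‖ ^ 2) ^ (k + 1) := fun m => by
      rw [Real.norm_eq_abs, abs_mul, abs_pow, abs_neg,
        abs_of_nonneg (by positivity : 0 ≤ ‖x‖ ^ 2), pow_add]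
      gcongr
      exact mul_le_of_le_one_left (by positivity) (pow_le_one₀ (by positivity) hx2)
    rw [hFS, ← Real.norm_eq_abs]
    refine (tsum_of_norm_bounded (hg'.mul_right _).hasSum hle).trans ?_
    rw [tsum_mul_right]
    refine mul_le_mul_of_nonneg_right ?_ (by positivity)
    have := hg.sum_add_tsum_nat_add (k + 1)
    have h0 : 0 ≤ ∑ m ∈ Finset.range (k + 1), |g m| := Finset.sum_nonneg fun _ _ => abs_nonneg _
    linarith
  have hpoly : Tendsto (fun h : ℝ => (diffLap h ^ k) S 0 / h ^ (2 * k)) (𝓝[>] 0)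
      (𝓝 ((-4) ^ k * (g k * (k.factorial : ℝ) * risingFactorial (n / 2) k))) := by
    have := tendsto_finsetSum (Finset.range (k + 1)) fun m hm =>
      (tendsto_diffLap_norm_pow (n := n) k m (by simpa [Nat.lt_succ_iff] using hm)).const_mul
        (g m * (-1) ^ m)
    convert this using 2
    · simp only [hS, map_sum, map_smul, Finset.sum_apply, Pi.smul_apply, smul_eq_mul,
        Finset.sum_div, mul_div_assoc]
    · rw [Finset.sum_eq_single k]
      · rw [if_pos rfl, neg_pow (4 : ℝ) k]; ring
      · intro m _ hm; simp [hm]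
      · simp
  -- The remainder is evaluated at the finitely many points `h • t i`, each giving `O(h²ᵏ⁺²)`.
  have hR : Tendsto (fun h : ℝ => (diffLap h ^ k) (F - S) 0 / h ^ (2 * k)) (𝓝[>] 0) (𝓝 0) := by
    obtain ⟨ι, _, c, t, hrep⟩ := (finRep_diffLap (n := n) 1).pow k
    have hform : ∀ h : ℝ, (diffLap h ^ k) (F - S) 0 / h ^ (2 * k)
        = ∑ i, c i * ((F - S) (h • t i) / h ^ (2 * k)) := by
      intro h
      have := diffLap_pow_scale h k (F - S) 0
      rw [smul_zero] at this
      rw [this, (hrep _ 0).1, Finset.sum_div]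
      exact Finset.sum_congr rfl fun i _ => by rw [zero_add, mul_div_assoc]
    simp only [hform]
    suffices hi : ∀ i, Tendsto (fun h : ℝ => (F - S) (h • t i) / h ^ (2 * k)) (𝓝[>] 0) (𝓝 0) by
      simpa using tendsto_finsetSum Finset.univ fun i _ => (hi i).const_mul (c i)
    intro i
    have hz : Tendsto (fun h : ℝ => (∑' m, |g m|) * (‖t i‖ ^ 2) ^ (k + 1) * h ^ 2) (𝓝[>] 0)
        (𝓝 0) := by
      have hc : Continuous fun h : ℝ => (∑' m, |g m|) * (‖t i‖ ^ 2) ^ (k + 1) * h ^ 2 := by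
        fun_prop
      simpa using (hc.tendsto 0).mono_left nhdsWithin_le_nhds
    refine squeeze_zero_norm' ?_ hz
    have hsmall : ∀ᶠ h : ℝ in 𝓝[>] 0, ‖h • t i‖ ≤ 1 := by
      have hc : Continuous fun h : ℝ => ‖h • t i‖ := by fun_prop
      have := (hc.tendsto 0).mono_left (nhdsWithin_le_nhds (s := Set.Ioi 0))
      simp only [zero_smul, norm_zero] at this
      exact this.eventually_le_const one_pos
    filter_upwards [hsmall, self_mem_nhdsWithin] with h h1 (h0 : 0 < h)
    have := hrem _ h1
    rw [norm_div, Real.norm_eq_abs, Real.norm_eq_abs, abs_of_pos (by positivity : 0 < h ^ (2 * k)),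
      div_le_iff₀ (by positivity), Pi.sub_apply]
    refine this.trans (le_of_eq ?_)
    rw [norm_smul, Real.norm_eq_abs, abs_of_pos h0]
    ring
  have := hpoly.add hR
  rw [add_zero] at this
  refine this.congr fun h => ?_
  rw [map_sub, Pi.sub_apply]; ring

/-- Log-convexity of the even-indexed subsequence of `Mₖ = gₖ k! (n/2)ₖ`. Even indices suffice, and
there the signs `(-4)ᵏ` are positive. -/
lemma logconvex {n : ℕ} {f : ℝ → ℝ} (hf : IsRPD n f) (g : ℕ → ℝ)
    (hg : Summable fun m => |g m|) (hfg : ∀ r, f r = ∑' m, g m * (-(r ^ 2)) ^ m) (M : ℕ → ℝ)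
    (hM : ∀ k, M k = g k * (k.factorial : ℝ) * risingFactorial (n / 2) k)
    (hpos : ∀ k, 0 < M k) (i : ℕ) :
    M (2 * (i + 1)) ^ 2 ≤ M (2 * i) * M (2 * (i + 2)) := by
  have hF : (fun x : EuclideanSpace ℝ (Fin n) => f ‖x‖)
      = fun x => ∑' m, g m * (-(‖x‖ ^ 2)) ^ m := by funext x; exact hfg _
  have key : ∀ α β : ℝ, 0 ≤ α ^ 2 * ((-4) ^ (2 * i) * M (2 * i))
      + 2 * α * β * ((-4) ^ (i + (i + 2)) * M (i + (i + 2)))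
      + β ^ 2 * ((-4) ^ (2 * (i + 2)) * M (2 * (i + 2))) := by
    intro α β
    have l1 := (tendsto_diffLap_series (n := n) g hg (2 * i)).const_mul (α ^ 2)
    have l2 := (tendsto_diffLap_series (n := n) g hg (i + (i + 2))).const_mul (2 * α * β)
    have l3 := (tendsto_diffLap_series (n := n) g hg (2 * (i + 2))).const_mul (β ^ 2)
    rw [hM, hM, hM]
    refine ge_of_tendsto ((l1.add l2).add l3) ?_
    filter_upwards [self_mem_nhdsWithin] with h (h0 : 0 < h)
    have := quad_nonneg hf h (α / h ^ (2 * i)) (β / h ^ (2 * (i + 2))) i (i + 2)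
    rw [hF] at this
    refine this.trans (le_of_eq ?_)
    have e1 : h ^ (2 * (2 * i)) = h ^ (2 * i) * h ^ (2 * i) := by ring
    have e2 : h ^ (2 * (i + (i + 2))) = h ^ (2 * i) * h ^ (2 * (i + 2)) := by ring
    have e3 : h ^ (2 * (2 * (i + 2))) = h ^ (2 * (i + 2)) * h ^ (2 * (i + 2)) := by ring
    rw [e1, e2, e3]
    field_simp
  have hA := hpos (2 * i)
  -- The minimiser over `α` at `β = -1`, where the form becomes a multiple of the discriminant.
  have hq := key (M (2 * (i + 1)) / M (2 * i) * 16) (-1)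
  rw [show i + (i + 2) = 2 * (i + 1) by ring] at hq
  have f1 : ((-4 : ℝ)) ^ (2 * (i + 1)) = (-4) ^ (2 * i) * 16 := by
    rw [mul_add, pow_add]; norm_num
  have f2 : ((-4 : ℝ)) ^ (2 * (i + 2)) = (-4) ^ (2 * i) * 256 := by
    rw [mul_add, pow_add]; norm_num
  have f0 : (0 : ℝ) < (-4) ^ (2 * i) := by rw [pow_mul]; positivity
  rw [f1, f2] at hq
  have hq' : 0 ≤ (-4) ^ (2 * i) * 256 / M (2 * i)
      * (M (2 * i) * M (2 * (i + 2)) - M (2 * (i + 1)) ^ 2) := by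
    refine hq.trans (le_of_eq ?_)
    field_simp
    ring
  have := nonneg_of_mul_nonneg_right hq' (by positivity)
  linarith

/-! ### Asymptotics of the hypergeometric coefficients -/

/-- Ratio test: each `(aᵢ + k) / (bᵢ + k)` tends to `1`, and the unpaired last `b` together with
`k + 1` sends the ratio to `0`. -/
lemma summable_coef {p : ℕ} (a : Fin p → ℝ) (b : Fin (p + 1) → ℝ)
    (ha : ∀ i, 0 < a i) (hb : ∀ j, 0 < b j) : Summable fun m => |coef a b m| := by
  have hpos : ∀ k, 0 < coef a b k := fun k => by
    refine div_pos (Finset.prod_pos fun i _ => risingFactorial_pos (ha i) k)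
      (mul_pos (Finset.prod_pos fun i _ => risingFactorial_pos (hb i) k) (by positivity))
  have hone : ∀ x y : ℝ, 0 < y →
      Tendsto (fun k : ℕ => (x + k) / (y + k)) atTop (𝓝 1) := fun x y hy => by
    have h0 : Tendsto (fun k : ℕ => y + (k : ℝ)) atTop atTop :=
      tendsto_atTop_add_const_left _ _ tendsto_natCast_atTop_atTop
    have := (h0.const_div_atTop (x - y)).const_add 1
    rw [add_zero] at this
    refine this.congr fun k => ?_
    have : y + (k : ℝ) ≠ 0 := by positivity
    field_simp; ring
  have hlast : Tendsto (fun k : ℕ => 1 / ((b (Fin.last p) + k) * ((k : ℝ) + 1))) atTop (𝓝 0) := by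
    have h0 : Tendsto (fun k : ℕ => b (Fin.last p) + (k : ℝ)) atTop atTop :=
      tendsto_atTop_add_const_left _ _ tendsto_natCast_atTop_atTop
    have h1 : Tendsto (fun k : ℕ => (k : ℝ) + 1) atTop atTop :=
      tendsto_atTop_add_const_right _ _ tendsto_natCast_atTop_atTop
    exact (h0.atTop_mul_atTop₀ h1).const_div_atTop 1
  have hprod : Tendsto (fun k : ℕ => ∏ i : Fin p, (a i + k) / (b i.castSucc + k)) atTop
      (𝓝 (∏ i : Fin p, (1 : ℝ))) :=
    tendsto_finsetProd _ fun i _ => hone _ _ (hb _)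
  have hlim := hprod.mul hlast
  rw [mul_zero] at hlim
  refine Summable.abs (summable_of_ratio_test_tendsto_lt_one (l := 0) one_pos
    (Eventually.of_forall fun k => (hpos k).ne') (hlim.congr fun k => ?_))
  rw [Real.norm_of_nonneg (hpos _).le, Real.norm_of_nonneg (hpos _).le]
  have hA : (∏ i, risingFactorial (a i) k) ≠ 0 :=
    (Finset.prod_pos fun i _ => risingFactorial_pos (ha i) k).ne'
  have hB : (∏ i, risingFactorial (b i) k) ≠ 0 :=
    (Finset.prod_pos fun i _ => risingFactorial_pos (hb i) k).ne'
  have hB' : (∏ i : Fin p, (b i.castSucc + (k : ℝ))) ≠ 0 :=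
    (Finset.prod_pos fun i _ => by have := hb i.castSucc; positivity).ne'
  have hl : b (Fin.last p) + (k : ℝ) ≠ 0 := by have := hb (Fin.last p); positivity
  have hk : (k.factorial : ℝ) ≠ 0 := by positivity
  simp only [coef, risingFactorial_succ, Finset.prod_mul_distrib, Nat.factorial_succ,
    Finset.prod_div_distrib]
  rw [Fin.prod_univ_castSucc (fun j => b j + (k : ℝ))]
  push_cast
  field_simp

/-- The logarithm of `(s + k) ∏ (aᵢ + k) / ∏ (bⱼ + k)`, which for `s = n/2` is the ratio
`Mₖ₊₁ / Mₖ`. -/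
noncomputable def logRatio {p : ℕ} (s : ℝ) (a : Fin p → ℝ) (b : Fin (p + 1) → ℝ) (k : ℕ) : ℝ :=
  Real.log (s + k) + ∑ i, Real.log (a i + k) - ∑ j, Real.log (b j + k)

/-- There are as many factors above as below, so the terms `log k` cancel and each factor `x + k`
contributes `k log (1 + x/k) → x`. -/
lemma tendsto_mul_logRatio {p : ℕ} (s : ℝ) (a : Fin p → ℝ) (b : Fin (p + 1) → ℝ) (hs : 0 < s)
    (ha : ∀ i, 0 < a i) (hb : ∀ j, 0 < b j) :
    Tendsto (fun k : ℕ => (k : ℝ) * logRatio s a b k) atTop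
      (𝓝 (s + ∑ i, a i - ∑ j, b j)) := by
  have h1 : ∀ x : ℝ, Tendsto (fun k : ℕ => (k : ℝ) * Real.log (1 + x / k)) atTop (𝓝 x) :=
    fun x => (Real.tendsto_mul_log_one_add_div_atTop x).comp tendsto_natCast_atTop_atTop
  have := ((h1 s).add (tendsto_finsetSum Finset.univ fun i _ => h1 (a i))).sub
    (tendsto_finsetSum Finset.univ fun j _ => h1 (b j))
  refine this.congr' ?_
  filter_upwards [eventually_gt_atTop 0] with k hk
  have hk' : (0 : ℝ) < k := by exact_mod_cast hk
  have hlog : ∀ x : ℝ, 0 < x → Real.log (x + k) = Real.log k + Real.log (1 + x / k) := by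
    intro x hx
    rw [← Real.log_mul hk'.ne' (by positivity)]
    congr 1
    field_simp
    ring
  simp only [logRatio, hlog _ hs, hlog _ (ha _), hlog _ (hb _), Finset.sum_add_distrib,
    Finset.sum_const, Finset.card_univ, Fintype.card_fin, nsmul_eq_mul, ← Finset.mul_sum]
  push_cast
  ring

end RPDExcess

open RPDExcess in
/-- If the Bessel-type function `r ↦ p-1Fp(a;b;-r²)` is radial positive
definite in dimension `n`, then the parametric excess `∑ b_j - ∑ a_j` is at least `n/2`. -/
theorem rpd_implies_parametric_excess_ge
    (n p : ℕ) (hn : 1 ≤ n)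
    (a : Fin p → ℝ) (b : Fin (p + 1) → ℝ)
    (ha : ∀ i, 0 < a i) (hb : ∀ j, 0 < b j)
    (h : IsRPD n (fun r => pFq a b (-(r ^ 2)))) :
    (n : ℝ) / 2 ≤ ∑ j, b j - ∑ i, a i := by
  have hs : (0 : ℝ) < (n : ℝ) / 2 := by
    have : (0 : ℝ) < n := by exact_mod_cast hn
    positivity
  set M : ℕ → ℝ := fun k => coef a b k * (k.factorial : ℝ) * risingFactorial (n / 2) k with hM
  have hApos : ∀ k, 0 < ∏ i, risingFactorial (a i) k := fun k =>
    Finset.prod_pos fun i _ => risingFactorial_pos (ha i) k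
  have hBpos : ∀ k, 0 < ∏ i, risingFactorial (b i) k := fun k =>
    Finset.prod_pos fun i _ => risingFactorial_pos (hb i) k
  have hpos : ∀ k, 0 < M k := fun k => by
    have h1 := hApos k
    have h2 := hBpos k
    have h3 := risingFactorial_pos hs k
    simp only [hM, coef]
    positivity
  have hconv := logconvex h (coef a b) (summable_coef a b ha hb) (fun r => rfl) M
    (fun k => rfl) hpos
  set L := logRatio ((n : ℝ) / 2) a b with hL
  have hlogM : ∀ k, Real.log (M (k + 1)) - Real.log (M k) = L k := by
    intro k
    have hA' : 0 < ∏ i, (a i + (k : ℝ)) :=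
      Finset.prod_pos fun i _ => by have := ha i; positivity
    have hB' : 0 < ∏ i, (b i + (k : ℝ)) :=
      Finset.prod_pos fun i _ => by have := hb i; positivity
    have hrec : M (k + 1)
        = M k * (((n : ℝ) / 2 + k) * (∏ i, (a i + (k : ℝ))) / ∏ i, (b i + (k : ℝ))) := by
      have h1 := (hApos k).ne'
      have h2 := (hBpos k).ne'
      have h3 : (k.factorial : ℝ) ≠ 0 := by positivity
      simp only [hM, coef, risingFactorial_succ, Finset.prod_mul_distrib, Nat.factorial_succ]
      push_cast
      field_simp
    rw [hrec, Real.log_mul (hpos k).ne' (by positivity), Real.log_div (by positivity) hB'.ne',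
      Real.log_mul (by positivity) hA'.ne',
      Real.log_prod fun i _ => by have := ha i; positivity,
      Real.log_prod fun i _ => by have := hb i; positivity]
    simp only [hL, logRatio]
    ring
  have hlim := tendsto_mul_logRatio ((n : ℝ) / 2) a b hs ha hb
  rw [← hL] at hlim
  have hL0 : Tendsto L atTop (𝓝 0) := by
    have := hlim.mul (tendsto_inv_atTop_nhds_zero_nat (𝕜 := ℝ))
    rw [mul_zero] at this
    refine this.congr' ?_
    filter_upwards [eventually_gt_atTop 0] with k hk
    have hk' : (k : ℝ) ≠ 0 := by exact_mod_cast hk.ne'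
    field_simp
  have hmono : Monotone fun i : ℕ => L (2 * i) + L (2 * i + 1) := by
    refine monotone_nat_of_le_succ fun i => ?_
    have hc := Real.log_le_log (by have := hpos (2 * (i + 1)); positivity) (hconv i)
    rw [Real.log_pow, Real.log_mul (hpos _).ne' (hpos _).ne'] at hc
    have e1 := hlogM (2 * i)
    have e2 := hlogM (2 * i + 1)
    have e3 := hlogM (2 * (i + 1))
    have e4 := hlogM (2 * (i + 1) + 1)
    rw [show 2 * i + 1 + 1 = 2 * (i + 1) by ring] at e2
    rw [show 2 * (i + 1) + 1 + 1 = 2 * (i + 2) by ring] at e4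
    push_cast at hc
    linarith
  have hv0 : Tendsto (fun i : ℕ => L (2 * i) + L (2 * i + 1)) atTop (𝓝 0) := by
    have t1 : Tendsto (fun i : ℕ => 2 * i) atTop atTop :=
      tendsto_id.const_mul_atTop' two_pos
    have t2 : Tendsto (fun i : ℕ => 2 * i + 1) atTop atTop := (tendsto_add_atTop_nat 1).comp t1
    simpa using (hL0.comp t1).add (hL0.comp t2)
  have hle := fun i => hmono.ge_of_tendsto hv0 i
  by_contra hcon
  have hδ : 0 < (n : ℝ) / 2 + ∑ i, a i - ∑ j, b j := by linarith
  obtain ⟨K, hK⟩ := eventually_atTop.1 (hlim.eventually_const_lt hδ)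
  have hLpos : ∀ k, K ≤ k → 0 < L k := fun k hk =>
    pos_of_mul_pos_right (hK k hk) (Nat.cast_nonneg k)
  have := hle K
  have h1 := hLpos (2 * K) (by omega)
  have h2 := hLpos (2 * K + 1) (by omega)
  linarith
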